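/- Let σ ∈ Γ((1,1,1)). Then σ = (4n1, 4n2, 4n3) for some nonnegative integers n1, n2, n3, and the pair of residues ((n1 − n3) mod 4, (n2 − n3) mod 4) belongs to 𝒯. Conversely, every pair in 𝒯 occurs: the vectors (0,0,0), (4,0,0), (0,4,0), (4,4,0), (4,4,12), (4,0,8), (0,4,8), (0,0,4) all lie in Γ((1,1,1)) and realize the types (0,0), (1,0), (0,1), (1,1), (2,2), (3,2), (2,3), (3,3), respectively. -/

import Mathlib

/-- The (normalized) Cartan matrix of the affine Lie algebra `B₂⁽¹⁾`. -/
noncomputable def cartanB2 : Matrix (Fin 3) (Fin 3) ℝ :=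
  !![1, 0, -1; 0, 1, -1; -1/2, -1/2, 1]

/-- The generator `R_i` (for the parameter `μ`) acting on `ℝ³`. -/
noncomputable def R (μ : Fin 3 → ℝ) (i : Fin 3) (σ : Fin 3 → ℝ) : Fin 3 → ℝ :=
  Function.update σ i (σ i + 4 * μ i - 2 * ∑ j, cartanB2 i j * σ j)

/-- Membership in `Γ(μ)`, the smallest subset of `ℝ³` containing `0` and closed under
the generators `R₁, R₂, R₃`. -/
inductive GammaMem (μ : Fin 3 → ℝ) : (Fin 3 → ℝ) → Prop
  | zero : GammaMem μ 0
  | step (i : Fin 3) {σ : Fin 3 → ℝ} : GammaMem μ σ → GammaMem μ (R μ i σ)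

/-- The set `𝒯` of the eight admissible types in `(ℤ/4ℤ)²`. -/
def Ttypes : Set (ZMod 4 × ZMod 4) :=
  {(0, 0), (0, 1), (1, 0), (1, 1), (2, 2), (2, 3), (3, 2), (3, 3)}

/-- `v ∈ Γ(1,1,1)` and `v = (4n₁, 4n₂, 4n₃)` with type `((n₁-n₃) mod 4, (n₂-n₃) mod 4) = t`. -/
def realizesType (v : Fin 3 → ℝ) (t : ZMod 4 × ZMod 4) : Prop :=
  GammaMem ![1, 1, 1] v ∧ ∃ n : Fin 3 → ℕ, (∀ i, v i = 4 * (n i : ℝ)) ∧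
    ((n 0 : ZMod 4) - (n 2 : ZMod 4), (n 1 : ZMod 4) - (n 2 : ZMod 4)) = t

/-!
As a function of `σ i` alone, the difference of the two sides of the Pohozaev identity is a monic
quadratic (up to a factor `2` for the last coordinate), and `R μ i` exchanges its two roots. Since
the identity holds at `0`, it holds on all of `Γ(μ)`. For `μ = (1, 1, 1)` the points are `4n` with
`n` integral, and with `a = n₁ - n₃`, `b = n₂ - n₃` the identity becomes
`a (a - 1) + b (b - 1) = 4 n₃`. Since `k (k - 1) ≥ 0` for every integer `k`, this forces `n ≥ 0`,
and `𝒯` is precisely the set of solutions `(a, b)` modulo `4`.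
-/

/-- The left side minus the right side of the Pohozaev identity for `μ`, where `ν = 4μ`. Absorbing
the factor `4` into `ν` makes it homogeneous of degree two in `(ν, σ)`, so that it applies unchanged
to `(ν / 4, σ / 4)`; the ring is arbitrary so that it also makes sense over `ℤ` and `ZMod 4`. -/
def pohozaevDefect {A : Type*} [CommRing A] (ν σ : Fin 3 → A) : A :=
  (σ 0 - σ 2) ^ 2 + (σ 1 - σ 2) ^ 2 - (ν 0 * σ 0 + ν 1 * σ 1 + 2 * ν 2 * σ 2)

section Defect

variable {A : Type*} [CommRing A]

theorem pohozaevDefect_eq (ν σ : Fin 3 → A) :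
    pohozaevDefect ν σ =
      (σ 0 - σ 2) * (σ 0 - σ 2 - ν 0) + (σ 1 - σ 2) * (σ 1 - σ 2 - ν 1) -
        (ν 0 + ν 1 + 2 * ν 2) * σ 2 := by
  unfold pohozaevDefect
  ring

theorem pohozaevDefect_smul (c : A) (ν σ : Fin 3 → A) :
    pohozaevDefect (c • ν) (c • σ) = c ^ 2 * pohozaevDefect ν σ := by
  simp only [pohozaevDefect, Pi.smul_apply, smul_eq_mul]
  ring

theorem map_pohozaevDefect {B : Type*} [CommRing B] (f : A →+* B) (ν σ : Fin 3 → A) :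
    f (pohozaevDefect ν σ) = pohozaevDefect (f ∘ ν) (f ∘ σ) := by
  simp [pohozaevDefect, map_ofNat f 2]

end Defect

section Generators

variable (μ σ : Fin 3 → ℝ)

theorem R_zero : R μ 0 σ = ![2 * σ 2 - σ 0 + 4 * μ 0, σ 1, σ 2] := by
  have hvalue : σ 0 + 4 * μ 0 - 2 * ∑ j, cartanB2 0 j * σ j = 2 * σ 2 - σ 0 + 4 * μ 0 := by
    simp only [cartanB2, Fin.sum_univ_three, Matrix.of_apply, Matrix.cons_val]
    ring
  rw [R, hvalue]
  ext j
  fin_cases j <;> rfl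

theorem R_one : R μ 1 σ = ![σ 0, 2 * σ 2 - σ 1 + 4 * μ 1, σ 2] := by
  have hvalue : σ 1 + 4 * μ 1 - 2 * ∑ j, cartanB2 1 j * σ j = 2 * σ 2 - σ 1 + 4 * μ 1 := by
    simp only [cartanB2, Fin.sum_univ_three, Matrix.of_apply, Matrix.cons_val]
    ring
  rw [R, hvalue]
  ext j
  fin_cases j <;> rfl

theorem R_two : R μ 2 σ = ![σ 0, σ 1, σ 0 + σ 1 - σ 2 + 4 * μ 2] := by
  have hvalue : σ 2 + 4 * μ 2 - 2 * ∑ j, cartanB2 2 j * σ j = σ 0 + σ 1 - σ 2 + 4 * μ 2 := by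
    simp only [cartanB2, Fin.sum_univ_three, Matrix.of_apply, Matrix.cons_val]
    ring
  rw [R, hvalue]
  ext j
  fin_cases j <;> rfl

theorem pohozaevDefect_R (i : Fin 3) :
    pohozaevDefect ((4 : ℝ) • μ) (R μ i σ) = pohozaevDefect ((4 : ℝ) • μ) σ := by
  simp only [pohozaevDefect, Pi.smul_apply, smul_eq_mul]
  match i with
  | 0 => simp only [R_zero, Matrix.cons_val]; ring
  | 1 => simp only [R_one, Matrix.cons_val]; ring
  | 2 => simp only [R_two, Matrix.cons_val]; ring

end Generators

namespace GammaMem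

variable {μ σ : Fin 3 → ℝ}

theorem step_zero {x x' y z : ℝ} (h : GammaMem μ ![x, y, z])
    (hx : x' = 2 * z - x + 4 * μ 0) : GammaMem μ ![x', y, z] := by
  simpa [R_zero, hx] using h.step 0

theorem step_one {x y y' z : ℝ} (h : GammaMem μ ![x, y, z])
    (hy : y' = 2 * z - y + 4 * μ 1) : GammaMem μ ![x, y', z] := by
  simpa [R_one, hy] using h.step 1

theorem step_two {x y z z' : ℝ} (h : GammaMem μ ![x, y, z])
    (hz : z' = x + y - z + 4 * μ 2) : GammaMem μ ![x, y, z'] := by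
  simpa [R_two, hz] using h.step 2

theorem pohozaevDefect_eq_zero (h : GammaMem μ σ) : pohozaevDefect ((4 : ℝ) • μ) σ = 0 := by
  induction h with
  | zero => simp [pohozaevDefect]
  | step i _ ih => rwa [pohozaevDefect_R]

theorem apply_mem {S : AddSubgroup ℝ} (hμ : ∀ i, 4 * μ i ∈ S) (h : GammaMem μ σ) :
    ∀ i, σ i ∈ S := by
  induction h with
  | zero => exact fun _ ↦ S.zero_mem
  | @step i σ _ ih =>
    have two_mul_mem : 2 * σ 2 ∈ S := two_mul (σ 2) ▸ S.add_mem (ih 2) (ih 2)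
    fin_cases i
    · simpa [R_zero, Fin.forall_fin_succ, ih] using
        S.add_mem (S.sub_mem two_mul_mem (ih 0)) (hμ 0)
    · simpa [R_one, Fin.forall_fin_succ, ih] using
        S.add_mem (S.sub_mem two_mul_mem (ih 1)) (hμ 1)
    · simpa [R_two, Fin.forall_fin_succ, ih] using
        S.add_mem (S.sub_mem (S.add_mem (ih 0) (ih 1)) (ih 2)) (hμ 2)

theorem exists_int_pohozaevDefect_eq_zero {m : Fin 3 → ℤ} (hm : ∀ i, μ i = m i)
    (h : GammaMem μ σ) :
    ∃ n : Fin 3 → ℤ, (∀ i, σ i = 4 * (n i : ℝ)) ∧ pohozaevDefect m n = 0 := by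
  have hmem := h.apply_mem (S := .zmultiples 4) fun i ↦ ⟨m i, by simp [hm, mul_comm]⟩
  choose n hn using fun i ↦ AddSubgroup.mem_zmultiples_iff.1 (hmem i)
  have hσ : σ = (4 : ℝ) • (Int.castRingHom ℝ ∘ n) := by ext i; simp [← hn, mul_comm]
  have hμ : μ = Int.castRingHom ℝ ∘ m := funext hm
  have hdefect := h.pohozaevDefect_eq_zero
  rw [hσ, hμ, pohozaevDefect_smul, ← map_pohozaevDefect] at hdefect
  exact ⟨n, congrFun hσ, by simpa using hdefect⟩

end GammaMem

theorem nonneg_of_pohozaevDefect_one_nonpos {n : Fin 3 → ℤ} (h : pohozaevDefect 1 n ≤ 0) :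
    0 ≤ n := by
  simp only [pohozaevDefect_eq, Pi.one_apply] at h
  have ha := Int.le_self_sq (n 0 - n 2)
  have hb := Int.le_self_sq (n 1 - n 2)
  have h₂ : 0 ≤ n 2 := by linarith
  -- For `a = n 0 - n 2`, `b = n 1 - n 2`, adding `4 a` to `4 (n 2) ≥ a (a - 1) + b (b - 1)` gives
  -- `4 (n 0) ≥ (a + 2) (a + 1) - 2 + b (b - 1) ≥ -2`, and `n 0` is an integer; likewise for `n 1`.
  have h₀ : 0 ≤ n 0 := by linarith [Int.le_self_sq (n 0 - n 2 + 2)]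
  have h₁ : 0 ≤ n 1 := by linarith [Int.le_self_sq (n 1 - n 2 + 2)]
  exact fun | 0 => h₀ | 1 => h₁ | 2 => h₂

theorem mem_Ttypes_iff (a b : ZMod 4) : (a, b) ∈ Ttypes ↔ a * (a - 1) + b * (b - 1) = 0 := by
  simp only [Ttypes, Set.mem_insert_iff, Set.mem_singleton_iff]
  decide +revert

theorem mem_Ttypes_iff_pohozaevDefect_one (n : Fin 3 → ZMod 4) :
    (n 0 - n 2, n 1 - n 2) ∈ Ttypes ↔ pohozaevDefect 1 n = 0 := by
  have four_eq_zero : (1 + 1 + 2 * 1 : ZMod 4) = 0 := rfl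
  simp only [mem_Ttypes_iff, pohozaevDefect_eq, Pi.one_apply, four_eq_zero, zero_mul, sub_zero]

theorem GammaMem.exists_nat_mem_Ttypes {σ : Fin 3 → ℝ} (h : GammaMem ![1, 1, 1] σ) :
    ∃ n : Fin 3 → ℕ, (∀ i, σ i = 4 * (n i : ℝ)) ∧
      ((n 0 : ZMod 4) - (n 2 : ZMod 4), (n 1 : ZMod 4) - (n 2 : ZMod 4)) ∈ Ttypes := by
  obtain ⟨n, hσ, hn⟩ :=
    h.exists_int_pohozaevDefect_eq_zero (m := 1) (by simp [Fin.forall_fin_succ])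
  lift n to Fin 3 → ℕ using nonneg_of_pohozaevDefect_one_nonpos hn.le
  refine ⟨n, by simpa using hσ, (mem_Ttypes_iff_pohozaevDefect_one fun i ↦ n i).2 ?_⟩
  have hmap := map_pohozaevDefect (Int.castRingHom (ZMod 4)) 1 fun i ↦ (n i : ℤ)
  rw [hn, map_zero] at hmap
  simpa [Function.comp_def, Pi.one_def] using hmap.symm

/-- Every `σ ∈ Γ(1,1,1)` is of the form `(4n₁, 4n₂, 4n₃)` with type in `𝒯`, and all eight
types of `𝒯` are realized by the listed explicit elements of `Γ(1,1,1)`. -/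
theorem gamma111_eight_types :
    (∀ σ : Fin 3 → ℝ, GammaMem ![1, 1, 1] σ →
      ∃ n : Fin 3 → ℕ, (∀ i, σ i = 4 * (n i : ℝ)) ∧
        ((n 0 : ZMod 4) - (n 2 : ZMod 4), (n 1 : ZMod 4) - (n 2 : ZMod 4)) ∈ Ttypes) ∧
    realizesType ![0, 0, 0] (0, 0) ∧
    realizesType ![4, 0, 0] (1, 0) ∧
    realizesType ![0, 4, 0] (0, 1) ∧
    realizesType ![4, 4, 0] (1, 1) ∧
    realizesType ![4, 4, 12] (2, 2) ∧
    realizesType ![4, 0, 8] (3, 2) ∧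
    realizesType ![0, 4, 8] (2, 3) ∧
    realizesType ![0, 0, 4] (3, 3) := by
  have m000 : GammaMem ![1, 1, 1] ![0, 0, 0] := by
    convert GammaMem.zero using 1
    simp [funext_iff, Fin.forall_fin_succ]
  have m100 : GammaMem ![1, 1, 1] ![4, 0, 0] := m000.step_zero (by simp)
  have m010 : GammaMem ![1, 1, 1] ![0, 4, 0] := m000.step_one (by simp)
  have m110 : GammaMem ![1, 1, 1] ![4, 4, 0] := m100.step_one (by simp)
  have m113 : GammaMem ![1, 1, 1] ![4, 4, 12] := m110.step_two <| by
    simp only [Matrix.cons_val]; norm_num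
  have m102 : GammaMem ![1, 1, 1] ![4, 0, 8] := m100.step_two <| by
    simp only [Matrix.cons_val]; norm_num
  have m012 : GammaMem ![1, 1, 1] ![0, 4, 8] := m010.step_two <| by
    simp only [Matrix.cons_val]; norm_num
  have m001 : GammaMem ![1, 1, 1] ![0, 0, 4] := m000.step_two (by simp)
  exact ⟨fun _ ↦ GammaMem.exists_nat_mem_Ttypes,
    ⟨m000, ![0, 0, 0], by norm_num [Fin.forall_fin_succ], by decide⟩,
    ⟨m100, ![1, 0, 0], by norm_num [Fin.forall_fin_succ], by decide⟩,
    ⟨m010, ![0, 1, 0], by norm_num [Fin.forall_fin_succ], by decide⟩,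
    ⟨m110, ![1, 1, 0], by norm_num [Fin.forall_fin_succ], by decide⟩,
    ⟨m113, ![1, 1, 3], by norm_num [Fin.forall_fin_succ], by decide⟩,
    ⟨m102, ![1, 0, 2], by norm_num [Fin.forall_fin_succ], by decide⟩,
    ⟨m012, ![0, 1, 2], by norm_num [Fin.forall_fin_succ], by decide⟩,
    ⟨m001, ![0, 0, 1], by norm_num [Fin.forall_fin_succ], by decide⟩⟩
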